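/- Let r ≥ 1, g ≥ 1, δ ≥ 1 and m ≥ 1 be integers with δ dividing 2g − 2. Let Λ = ℤ^r with standard basis e₁, …, e_r and set d = m·e₁ ∈ Λ. Let Bil^s(Λ) denote the abelian group of symmetric ℤ-bilinear forms on Λ, and let ∂ : Bil^s(Λ) → Hom(Λ, ℤ/δℤ) be the homomorphism sending b to the homomorphism x ↦ [b(d, x) + (1 − g)·b(x, x)] (this is well defined since δ ∣ 2g − 2). Then the cokernel of ∂ is isomorphic, as an abelian group, to (ℤ/gcd(δ, m + 1 − g)ℤ) ⊕ (ℤ/gcd(δ, g − 1, m)ℤ)^{⊕(r−1)}. -/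

import Mathlib

/-- The abelian group of symmetric `ℤ`-bilinear forms on `ℤ^r`. -/
def symmBil (r : ℕ) : AddSubgroup ((Fin r → ℤ) →ₗ[ℤ] (Fin r → ℤ) →ₗ[ℤ] ℤ) where
  carrier := {b | ∀ x y, b x y = b y x}
  zero_mem' := by intro x y; simp
  add_mem' := by
    intro a b ha hb x y
    simp only [LinearMap.add_apply]
    rw [ha x y, hb x y]
  neg_mem' := by
    intro a ha x y
    simp only [LinearMap.neg_apply]
    rw [ha x y]

/-!
A homomorphism on a free abelian group is determined by its values on a basis `e`, and if
`d = m • e i₀` the form `b` contributes the value `m * b (e i₀) (e i) + c * b (e i) (e i)` at `e i`,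
where `c = 1 - g`. A symmetric form can be given any entries in the row of `i₀` and on the diagonal,
which only meet at `(i₀, i₀)`. Hence the image of `∂` is a product: it consists of the homomorphisms
whose value at `e i₀` is a multiple of `m + c` and whose values at the other basis vectors are
multiples of `gcd(m, c)`. The multiples of `k` in `ℤ/δ` have quotient `ℤ/gcd(δ, k)`.
-/

section BilinForm

variable {R M ι : Type*} [CommSemiring R] [AddCommMonoid M] [Module R M]
  (e : Module.Basis ι R M)

theorem exists_isSymm_bilinForm_of_matrix {B : Matrix ι ι R} (hB : B.IsSymm) :
    ∃ b : LinearMap.BilinForm R M, b.IsSymm ∧ ∀ i j, b (e i) (e j) = B i j := by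
  let b : LinearMap.BilinForm R M := e.constr R fun i => e.constr R (B i)
  have hb : ∀ i j, b (e i) (e j) = B i j := by simp [b]
  have hflip : b.flip = b := LinearMap.BilinForm.ext_basis e fun i j => by
    rw [LinearMap.BilinForm.flip_apply, hb, hb, hB.apply]
  exact ⟨b, LinearMap.BilinForm.isSymm_iff_flip.2 hflip, hb⟩

theorem exists_isSymm_bilinForm_row_diagonal (i₀ : ι) {row diag : ι → R} (h : row i₀ = diag i₀) :
    ∃ b : LinearMap.BilinForm R M,
      b.IsSymm ∧ ∀ i, b (e i₀) (e i) = row i ∧ b (e i) (e i) = diag i := by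
  classical
  let B : Matrix ι ι R := .of fun i j =>
    if i = j then diag i else if i = i₀ then row j else if j = i₀ then row i else 0
  have hB : B.IsSymm := Matrix.IsSymm.ext fun i j => by grind [Matrix.of_apply]
  obtain ⟨b, hb, hbB⟩ := exists_isSymm_bilinForm_of_matrix e hB
  refine ⟨b, hb, fun i => ⟨?_, ?_⟩⟩ <;> rw [hbB] <;> grind [Matrix.of_apply]

end BilinForm

section ZMod

variable {N : ℕ}

theorem intCast_dvd_zmod_iff (k : ℤ) (x : ZMod N) :
    (k : ZMod N) ∣ x ↔ ∃ t : ℤ, x = (k * t : ℤ) := by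
  simp only [dvd_def, ZMod.intCast_surjective.exists, Int.cast_mul]

theorem intGcd_dvd_zmod_iff (a b : ℤ) (x : ZMod N) :
    ((Int.gcd a b : ℤ) : ZMod N) ∣ x ↔ ∃ s t : ℤ, x = (a * s + b * t : ℤ) := by
  rw [intCast_dvd_zmod_iff]
  constructor
  · rintro ⟨z, rfl⟩
    obtain ⟨s, t, hst⟩ := (gcd_dvd_iff_exists a b).1 (dvd_mul_right (gcd a b) z)
    exact ⟨s, t, by rw [← hst, Int.coe_gcd]⟩
  · rintro ⟨s, t, rfl⟩
    obtain ⟨z, hz⟩ := dvd_add ((Int.gcd_dvd_left a b).mul_right s)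
      ((Int.gcd_dvd_right a b).mul_right t)
    exact ⟨z, by rw [hz]⟩

theorem castHom_intGcd_eq_zero_iff (k : ℤ) (x : ZMod N) :
    ZMod.castHom (Int.gcd_dvd_natAbs_left N k) (ZMod (Int.gcd N k)) x = 0 ↔ (k : ZMod N) ∣ x := by
  constructor
  · obtain ⟨z, rfl⟩ := ZMod.intCast_surjective x
    rw [map_intCast, ZMod.intCast_zmod_eq_zero_iff_dvd, Int.coe_gcd, gcd_dvd_iff_exists]
    rintro ⟨s, t, rfl⟩
    exact ⟨t, by simp⟩
  · rintro ⟨y, rfl⟩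
    rw [map_mul, map_intCast, (ZMod.intCast_zmod_eq_zero_iff_dvd _ _).2 (Int.gcd_dvd_right N k),
      zero_mul]

end ZMod

section ReduceOnFamily

variable {Λ ι : Type*} {N : ℕ}

/-- The map `f ↦ (f (e i) mod gcd(N, k i))ᵢ`, which presents `∏ᵢ ℤ/gcd(N, k i)` as the quotient of
`Hom(Λ, ℤ/N)` by the homomorphisms with `f (e i) ∈ k i • ℤ/N` for all `i` when `e` is a basis. The
moduli are written as gcds so that `k i` may be any integer, divisor of `N` or not. -/
def reduceOnFamily [AddZeroClass Λ] (e : ι → Λ) (k : ι → ℤ) :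
    (Λ →+ ZMod N) →+ ∀ i, ZMod (Int.gcd N (k i)) :=
  AddMonoidHom.pi fun i =>
    (ZMod.castHom (Int.gcd_dvd_natAbs_left N (k i)) _).toAddMonoidHom.comp
      (AddMonoidHom.eval (e i))

theorem reduceOnFamily_apply [AddZeroClass Λ] (e : ι → Λ) (k : ι → ℤ) (f : Λ →+ ZMod N) (i : ι) :
    reduceOnFamily e k f i = ZMod.castHom (Int.gcd_dvd_natAbs_left N (k i)) _ (f (e i)) :=
  rfl

theorem mem_ker_reduceOnFamily_iff [AddZeroClass Λ] {e : ι → Λ} {k : ι → ℤ}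
    {f : Λ →+ ZMod N} :
    f ∈ (reduceOnFamily e k).ker ↔ ∀ i, (k i : ZMod N) ∣ f (e i) := by
  simp only [AddMonoidHom.mem_ker, funext_iff, reduceOnFamily_apply, Pi.zero_apply,
    castHom_intGcd_eq_zero_iff]

theorem reduceOnFamily_surjective [AddCommGroup Λ] [Module ℤ Λ] (e : Module.Basis ι ℤ Λ)
    (k : ι → ℤ) :
    Function.Surjective (reduceOnFamily (N := N) e k) := by
  intro y
  choose x hx using fun i => ZMod.castHom_surjective (Int.gcd_dvd_natAbs_left N (k i)) (y i)
  refine ⟨(e.constr ℤ x).toAddMonoidHom, funext fun i => ?_⟩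
  rw [reduceOnFamily_apply, LinearMap.toAddMonoidHom_coe, e.constr_basis, hx]

end ReduceOnFamily

section Boundary

variable {Λ ι κ : Type*} [AddCommGroup Λ] [Module ℤ Λ] {N : ℕ} {m c : ℤ}
  {S : AddSubgroup (LinearMap.BilinForm ℤ Λ)} {bdry : S →+ (Λ →+ ZMod N)}

theorem addMonoidHom_ext_basis {A : Type*} [AddCommGroup A] (e : Module.Basis ι ℤ Λ)
    {f f' : Λ →+ A} (h : ∀ i, f (e i) = f' (e i)) : f = f' := by
  obtain rfl := Subsingleton.elim ‹Module ℤ Λ› (AddCommGroup.toIntModule Λ)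
  exact AddMonoidHom.toIntLinearMap_injective (e.ext h)

theorem mem_range_boundary_iff (e : Module.Basis ι ℤ Λ) (i₀ : ι)
    (hS : ∀ b : LinearMap.BilinForm ℤ Λ, b.IsSymm → b ∈ S)
    (hbdry : ∀ (b : S) (x : Λ), bdry b x = (b.val (m • e i₀) x + c * b.val x x : ℤ))
    {f : Λ →+ ZMod N} :
    f ∈ bdry.range ↔
      ∀ i, ∃ s t : ℤ, (i = i₀ → s = t) ∧ f (e i) = (m * s + c * t : ℤ) := by
  have hbasis (b : S) (i : ι) :
      bdry b (e i) = (m * b.val (e i₀) (e i) + c * b.val (e i) (e i) : ℤ) := by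
    rw [hbdry, map_zsmul, LinearMap.smul_apply, smul_eq_mul]
  constructor
  · rintro ⟨b, rfl⟩ i
    exact ⟨b.val (e i₀) (e i), b.val (e i) (e i), by rintro rfl; rfl, hbasis b i⟩
  · intro hf
    choose row diag hmeet hf using hf
    obtain ⟨b, hb, hentries⟩ := exists_isSymm_bilinForm_row_diagonal e i₀ (hmeet i₀ rfl)
    refine ⟨⟨b, hS b hb⟩, addMonoidHom_ext_basis e fun i => ?_⟩
    rw [hbasis, (hentries i).1, (hentries i).2, hf i]

theorem range_boundary_eq_ker_reduceOnFamily (e : Module.Basis (Option κ) ℤ Λ)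
    (hS : ∀ b : LinearMap.BilinForm ℤ Λ, b.IsSymm → b ∈ S)
    (hbdry : ∀ (b : S) (x : Λ), bdry b x = (b.val (m • e none) x + c * b.val x x : ℤ)) :
    bdry.range =
      (reduceOnFamily e fun o => o.elim (m + c) fun _ => (Int.gcd m c : ℤ)).ker := by
  ext f
  rw [mem_range_boundary_iff e none hS hbdry, mem_ker_reduceOnFamily_iff, Option.forall,
    Option.forall]
  refine and_congr ?_ (forall_congr' fun i => ?_)
  · simp only [Option.elim_none, intCast_dvd_zmod_iff, add_mul, forall_const, exists_eq_left']
  · simp only [Option.elim_some, intGcd_dvd_zmod_iff, reduceCtorEq, IsEmpty.forall_iff, true_and]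

end Boundary

-- The basis is indexed by `Option κ` so that `none` marks the vector of which `d` is a multiple.
theorem coker_boundary_iso_general {Λ κ : Type*} [AddCommGroup Λ] [Module ℤ Λ]
    (e : Module.Basis (Option κ) ℤ Λ) (N : ℕ) (m c : ℤ)
    {S : AddSubgroup (LinearMap.BilinForm ℤ Λ)}
    (hS : ∀ b : LinearMap.BilinForm ℤ Λ, b.IsSymm → b ∈ S)
    (bdry : S →+ (Λ →+ ZMod N))
    (hbdry : ∀ (b : S) (x : Λ), bdry b x = (b.val (m • e none) x + c * b.val x x : ℤ)) :
    Nonempty (((Λ →+ ZMod N) ⧸ bdry.range) ≃+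
      (ZMod (Int.gcd N (m + c)) × (κ → ZMod (Int.gcd N (Int.gcd m c))))) := by
  let k : Option κ → ℤ := fun o => o.elim (m + c) fun _ => (Int.gcd m c : ℤ)
  have hrange : bdry.range = (reduceOnFamily e k).ker :=
    range_boundary_eq_ker_reduceOnFamily e hS hbdry
  let split : (∀ o, ZMod (Int.gcd N (k o))) ≃+ _ := RingEquiv.piOptionEquivProd.toAddEquiv
  exact ⟨(QuotientAddGroup.quotientAddEquivOfEq hrange).trans <|
    (QuotientAddGroup.quotientKerEquivOfSurjective _ (reduceOnFamily_surjective e k)).trans split⟩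

/-- Corollary 4.5(2): the cokernel of the boundary homomorphism
`∂ : Bil^s(ℤ^r) → Hom(ℤ^r, ℤ/δℤ)`, `b ↦ (x ↦ [b(d,x) + (1-g)·b(x,x)])` with
`d = m·e₁`, is isomorphic to
`ℤ/gcd(δ, m+1-g)ℤ ⊕ (ℤ/gcd(δ, g-1, m)ℤ)^{⊕(r-1)}`. -/
theorem coker_boundary_iso
    (r g δ m : ℕ) (hr : 1 ≤ r) (hg : 1 ≤ g) (hδ : 1 ≤ δ) (hm : 1 ≤ m)
    (hdvd : (δ : ℤ) ∣ 2 * g - 2)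
    (d : Fin r → ℤ) (hd : d = fun i => if i.val = 0 then (m : ℤ) else 0)
    (bdry : symmBil r →+ ((Fin r → ℤ) →+ ZMod δ))
    (hbdry : ∀ (b : symmBil r) (x : Fin r → ℤ),
        bdry b x = ((b.val d x + (1 - (g : ℤ)) * b.val x x : ℤ) : ZMod δ)) :
    Nonempty ((((Fin r → ℤ) →+ ZMod δ) ⧸ bdry.range) ≃+
      (ZMod (Int.gcd δ ((m : ℤ) + 1 - g)) ×
        (Fin (r - 1) → ZMod (Nat.gcd δ (Nat.gcd (g - 1) m))))) := by
  obtain ⟨n, rfl⟩ := Nat.exists_eq_add_of_le' hr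
  let e : Module.Basis (Option (Fin n)) ℤ (Fin (n + 1) → ℤ) :=
    (Pi.basisFun ℤ (Fin (n + 1))).reindex (finSuccEquiv n)
  have hde : d = (m : ℤ) • e none := by
    ext i
    simp [e, hd, Pi.single_apply]
  have hgcd : Int.gcd m (1 - g) = Nat.gcd (g - 1) m := by
    rw [Int.gcd_comm, ← Int.neg_gcd, neg_sub, ← Nat.cast_pred hg, Int.gcd_natCast_natCast]
  have key := coker_boundary_iso_general e δ m (1 - g) (S := symmBil (n + 1))
    (fun _ hb => hb.eq) bdry (hde ▸ hbdry)
  rwa [hgcd, ← add_sub_assoc] at key
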